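/- Let m and n be positive integers and r an integer whose residue class is a unit modulo m with r^n ≡ 1 (mod m). Let G be the split metacyclic group with presentation ⟨x, y | x^m = y^n = 1, y·x·y⁻¹ = x^r⟩, realized concretely as the semidirect product (ℤ/mℤ) ⋊ (ℤ/nℤ) in which the generator of ℤ/nℤ acts on ℤ/mℤ by multiplication by r. Set d = gcd(m, r − 1)·gcd(m, 1 + r + r² + … + r^{n−1}) / m, which is a (positive) integer. Then the second group homology of G with trivial integer coefficients satisfies H₂(G, ℤ) ≅ ℤ/dℤ. (This is Lemma 5.13 of the paper, used to count connected components of the regular-representation component (𝔐_g[G])_{r.r} of the moduli space of G-marked curves.) -/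

import Mathlib

/-!
Let `R` be the kernel of a free presentation of `G = ⟨x, y⟩`. In the central extension
`E = F / [F, R]`, take lifts `X`, `Y` of `x`, `y` and put `T = ⁅Y, X⁆`. Commutators in `E` depend
only on images in `G`, so `T` commutes with `X` and `Y` conjugates `T` to `T ^ r`; hence `T`
generates `[E, E]`, and expanding `⁅Y, X ^ m⁆ = 1 = ⁅Y ^ n, X⁆` shows that its order divides
`b = gcd(m, 1 + r + ⋯ + r ^ (n - 1))`.

Conversely put `a = gcd(m, r - 1)`. Some `t ≡ r (mod m)` satisfies `gcd(a b, t - 1) = a` and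
`t ^ n ≡ 1 (mod a b)`, and then `ℤ/abℤ ⋊ ℤ`, with `1` acting as `t`, is a central extension of `G`
in which the corresponding commutator has order exactly `b`. Since `E` maps to every central
extension, `T` has order `b`. By Hopf's formula the Schur multiplier is the kernel of `⟨T⟩ → G`;
the image of `T` is `x ^ (r - 1)`, of order `m / a`, so this kernel is cyclic of order `a b / m`.
-/

section SchurMultiplier

open Subgroup Multiplicative SemidirectProduct
open scoped commutatorElement

section Commutators

variable {E : Type*} [Group E]

theorem commutator_le_of_closure_eq_top {S : Set E} (hS : closure S = ⊤) {N : Subgroup E}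
    [N.Normal] (hN : ∀ a ∈ S, ∀ b ∈ S, ⁅a, b⁆ ∈ N) : commutator E ≤ N := by
  rw [← Normal.quotient_commutative_iff_commutator_le]
  have hcomm : ∀ a ∈ QuotientGroup.mk' N '' S, ∀ b ∈ QuotientGroup.mk' N '' S, a * b = b * a := by
    rintro _ ⟨a, ha, rfl⟩ _ ⟨b, hb, rfl⟩
    rw [← commutatorElement_eq_one_iff_mul_comm, ← map_commutatorElement]
    exact (QuotientGroup.eq_one_iff _).2 (hN a ha b hb)
  have htop : closure (QuotientGroup.mk' N '' S) = ⊤ := by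
    rw [← MonoidHom.map_closure, hS, map_top_of_surjective _ (QuotientGroup.mk'_surjective N)]
  have hclosure := isMulCommutative_closure hcomm
  rw [htop, ← commutator_self_eq_bot_iff] at hclosure
  exact (commutator_eq_bot_iff _).1 hclosure

theorem commutatorElement_pow_right {a b : E} (h : Commute ⁅a, b⁆ b) (k : ℕ) :
    ⁅a, b ^ k⁆ = ⁅a, b⁆ ^ k := by
  rw [commutatorElement_def, ← conj_pow, ← MulAut.conj_apply, conj_eq_commutatorElement_mul,
    h.mul_pow, mul_inv_cancel_right]

theorem commutatorElement_pow_left {a b : E} {r : ℤ} (h : a * ⁅a, b⁆ * a⁻¹ = ⁅a, b⁆ ^ r) (k : ℕ) :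
    ⁅a ^ k, b⁆ = ⁅a, b⁆ ^ ∑ i ∈ Finset.range k, r ^ i := by
  induction k with
  | zero => simp
  | succ k ih =>
    rw [pow_succ', commutatorElement_mul_left_eq_conj_mul, ih, ← conj_zpow, h, ← zpow_mul,
      ← zpow_add_one, geom_sum_succ]

end Commutators

section Cyclic

variable {E : Type*} [Group E]

theorem orderOf_zpow {x : E} (hx : IsOfFinOrder x) (k : ℤ) :
    orderOf (x ^ k) = orderOf x / Int.gcd (orderOf x) k := by
  rw [Int.gcd_def, Int.natAbs_natCast, ← hx.orderOf_pow]
  obtain h | h := k.natAbs_eq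
  · rw [← zpow_natCast, ← h]
  · rw [← orderOf_inv, ← zpow_natCast, ← zpow_neg, h]
    simp

theorem zpowers_inf_ker {G : Type*} [Group G] (p : E →* G) (t : E) :
    zpowers t ⊓ p.ker = zpowers (t ^ orderOf (p t)) := by
  ext a
  simp only [mem_inf, mem_zpowers_iff, MonoidHom.mem_ker]
  constructor
  · rintro ⟨⟨k, rfl⟩, hk⟩
    rw [map_zpow, ← orderOf_dvd_iff_zpow_eq_one] at hk
    obtain ⟨j, rfl⟩ := hk
    exact ⟨j, by rw [zpow_mul, zpow_natCast]⟩
  · rintro ⟨j, rfl⟩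
    exact ⟨⟨orderOf (p t) * j, by rw [zpow_mul, zpow_natCast]⟩, by simp [pow_orderOf_eq_one]⟩

end Cyclic

section CentralExtension

variable {E G : Type*} [Group E] [Group G] {p : E →* G}

theorem commutatorElement_eq_of_map_eq (hp : p.ker ≤ center E) {a a' b b' : E} (ha : p a = p a')
    (hb : p b = p b') : ⁅a, b⁆ = ⁅a', b'⁆ := by
  have left {c c' : E} (hc : p c = p c') (d : E) : ⁅c, d⁆ = ⁅c', d⁆ := by
    have hz : c'⁻¹ * c ∈ center E := hp (by simp [MonoidHom.mem_ker, hc])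
    have hconj : c'⁻¹ * c * d * (c'⁻¹ * c)⁻¹ = d := by
      rw [← mem_center_iff.1 hz, mul_inv_cancel_right]
    calc ⁅c, d⁆ = c' * (c'⁻¹ * c * d * (c'⁻¹ * c)⁻¹) * c'⁻¹ * d⁻¹ := by group
      _ = ⁅c', d⁆ := by rw [hconj, commutatorElement_def]
  rw [left ha, ← commutatorElement_inv, left hb, commutatorElement_inv]

theorem closure_union_center_eq_top (hp : p.ker ≤ center E) {S : Set E}
    (hS : closure (p '' S) = ⊤) : closure (S ∪ center E) = ⊤ := by
  rw [Subgroup.closure_union, closure_eq, ← top_le_iff, ← comap_top p, ← hS,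
    ← MonoidHom.map_closure, comap_map_eq]
  exact sup_le_sup_left hp _

theorem commutator_le_of_closure_image_eq_top (hp : p.ker ≤ center E) {S : Set E}
    (hS : closure (p '' S) = ⊤) {N : Subgroup E} [N.Normal]
    (hN : ∀ a ∈ S, ∀ b ∈ S, ⁅a, b⁆ ∈ N) : commutator E ≤ N := by
  refine commutator_le_of_closure_eq_top (closure_union_center_eq_top hp hS) ?_
  rintro a (ha | ha) b (hb | hb)
  · exact hN a ha b hb
  · exact (commutatorElement_eq_one_iff_mul_comm.2 (mem_center_iff.1 hb a)).symm ▸ one_mem N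
  all_goals
    exact (commutatorElement_eq_one_iff_mul_comm.2 (mem_center_iff.1 ha b).symm).symm ▸ one_mem N

section Metacyclic

variable {X Y : E} {r : ℤ}

theorem exists_mem_center_conj_eq (hp : p.ker ≤ center E)
    (hXY : p Y * p X * (p Y)⁻¹ = p X ^ r) : ∃ z ∈ center E, Y * X * Y⁻¹ = z * X ^ r :=
  ⟨Y * X * Y⁻¹ * (X ^ r)⁻¹, hp (by simp [MonoidHom.mem_ker, hXY]), by group⟩

theorem commute_commutatorElement (hp : p.ker ≤ center E)
    (hXY : p Y * p X * (p Y)⁻¹ = p X ^ r) : Commute ⁅Y, X⁆ X := by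
  obtain ⟨z, hz, h⟩ := exists_mem_center_conj_eq hp hXY
  rw [commutatorElement_def, h]
  have hzX : Commute z X := (mem_center_iff.1 hz X).symm
  exact (hzX.mul_left ((Commute.refl X).zpow_left r)).mul_left (Commute.refl X).inv_left

theorem conj_commutatorElement_eq_zpow (hp : p.ker ≤ center E)
    (hXY : p Y * p X * (p Y)⁻¹ = p X ^ r) : Y * ⁅Y, X⁆ * Y⁻¹ = ⁅Y, X⁆ ^ r := by
  have hTX : p ⁅Y, X⁆ = p (X ^ (r - 1)) := by
    rw [map_commutatorElement, commutatorElement_def, hXY, map_zpow, zpow_sub_one]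
  have hcomm := commute_commutatorElement hp hXY
  have hconj : Y * X * Y⁻¹ = ⁅Y, X⁆ * X := by simp [commutatorElement_def]
  -- `⁅Y, X⁆` and `X ^ (r - 1)` differ by a central element, so `Y` acts on both in the same way
  calc Y * ⁅Y, X⁆ * Y⁻¹
    _ = ⁅Y, ⁅Y, X⁆⁆ * ⁅Y, X⁆ := by
        rw [commutatorElement_def Y ⁅Y, X⁆, inv_mul_cancel_right]
    _ = ⁅Y, X ^ (r - 1)⁆ * ⁅Y, X⁆ := by rw [commutatorElement_eq_of_map_eq hp rfl hTX]
    _ = ⁅Y, X⁆ ^ r := by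
        rw [commutatorElement_def Y (X ^ _), ← conj_zpow, hconj, hcomm.mul_zpow,
          mul_inv_cancel_right, zpow_sub_one, inv_mul_cancel_right]

theorem commutatorElement_pow_eq_one (hp : p.ker ≤ center E)
    (hXY : p Y * p X * (p Y)⁻¹ = p X ^ r) {m : ℕ} (hX : p X ^ m = 1) : ⁅Y, X⁆ ^ m = 1 := by
  rw [← commutatorElement_pow_right (commute_commutatorElement hp hXY),
    commutatorElement_eq_of_map_eq hp rfl (b' := 1) (by simpa using hX),
    commutatorElement_one_right]

theorem commutatorElement_zpow_geom_sum_eq_one (hp : p.ker ≤ center E)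
    (hXY : p Y * p X * (p Y)⁻¹ = p X ^ r) {n : ℕ} (hY : p Y ^ n = 1) :
    ⁅Y, X⁆ ^ ∑ i ∈ Finset.range n, r ^ i = 1 := by
  rw [← commutatorElement_pow_left (conj_commutatorElement_eq_zpow hp hXY),
    commutatorElement_eq_of_map_eq hp (a' := 1) (by simpa using hY) rfl, commutatorElement_one_left]

theorem orderOf_commutatorElement_dvd (hp : p.ker ≤ center E)
    (hXY : p Y * p X * (p Y)⁻¹ = p X ^ r) {m n : ℕ} (hX : p X ^ m = 1) (hY : p Y ^ n = 1) :
    orderOf ⁅Y, X⁆ ∣ Int.gcd m (∑ i ∈ Finset.range n, r ^ i) :=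
  Int.dvd_gcd
    (Int.natCast_dvd_natCast.2 <| orderOf_dvd_of_pow_eq_one <|
      commutatorElement_pow_eq_one hp hXY hX)
    (orderOf_dvd_iff_zpow_eq_one.2 <| commutatorElement_zpow_geom_sum_eq_one hp hXY hY)

theorem zpowers_commutatorElement_normal (hp : p.ker ≤ center E)
    (hXY : p Y * p X * (p Y)⁻¹ = p X ^ r) (hgen : closure {p X, p Y} = ⊤)
    {m : ℕ} (hX : p X ^ m = 1) (hr : IsCoprime r m) : (zpowers ⁅Y, X⁆).Normal := by
  have hXmem : X ∈ normalizer (zpowers ⁅Y, X⁆ : Set E) := by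
    rw [mem_normalizer_iff_map_conj_eq, MonoidHom.map_zpowers]
    rw [MonoidHom.coe_coe, MulAut.conj_apply, (commute_commutatorElement hp hXY).symm.eq,
      mul_inv_cancel_right]
  have hYmem : Y ∈ normalizer (zpowers ⁅Y, X⁆ : Set E) := by
    have hgcd : Int.gcd r (orderOf ⁅Y, X⁆) = 1 := Int.isCoprime_iff_gcd_eq_one.1 <|
      hr.of_isCoprime_of_dvd_right <| Int.natCast_dvd_natCast.2 <|
        orderOf_dvd_of_pow_eq_one <| commutatorElement_pow_eq_one hp hXY hX
    rw [mem_normalizer_iff_map_conj_eq, MonoidHom.map_zpowers, MonoidHom.coe_coe,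
      MulAut.conj_apply, conj_commutatorElement_eq_zpow hp hXY]
    exact le_antisymm (zpowers_le.2 (zpow_mem_zpowers _ _))
      (zpowers_le.2 (mem_zpowers_zpow_iff.2 hgcd))
  rw [← normalizer_eq_top_iff, eq_top_iff,
    ← closure_union_center_eq_top hp (S := {X, Y}) (by rwa [Set.image_pair]), closure_le]
  exact Set.union_subset (Set.pair_subset hXmem hYmem) (center_le_normalizer _)

theorem commutator_eq_zpowers (hp : p.ker ≤ center E)
    (hXY : p Y * p X * (p Y)⁻¹ = p X ^ r) (hgen : closure {p X, p Y} = ⊤)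
    {m : ℕ} (hX : p X ^ m = 1) (hr : IsCoprime r m) : commutator E = zpowers ⁅Y, X⁆ := by
  have := zpowers_commutatorElement_normal hp hXY hgen hX hr
  have hT : ⁅Y, X⁆ ∈ zpowers ⁅Y, X⁆ := mem_zpowers _
  have hS : closure (p '' {X, Y}) = ⊤ := by rwa [Set.image_pair]
  refine le_antisymm (commutator_le_of_closure_image_eq_top hp hS ?_)
    (zpowers_le.2 (commutator_mem_commutator (mem_top Y) (mem_top X)))
  simp only [Set.forall_mem_insert, Set.mem_singleton_iff, forall_eq, commutatorElement_self]
  exact ⟨⟨one_mem _, commutatorElement_inv Y X ▸ inv_mem hT⟩, hT, one_mem _⟩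

end Metacyclic

end CentralExtension

section Hopf

theorem map_inf_of_ker_le {E E' : Type*} [Group E] [Group E'] {f : E →* E'} {H : Subgroup E}
    (hH : f.ker ≤ H) (K : Subgroup E) : (H ⊓ K).map f = H.map f ⊓ K.map f := by
  refine le_antisymm (map_inf_le H K f) ?_
  rintro _ ⟨hx, k, hk, rfl⟩
  have hkH : k ∈ (H.map f).comap f := hx
  rw [comap_map_eq_self hH] at hkH
  exact mem_map_of_mem f ⟨hkH, hk⟩

variable {F G : Type*} [Group F] [Group G]

/-- The Schur multiplier `H₂(G, ℤ)` of a group `G` presented by a surjection `π : F →* G` from a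
free group with kernel `R`, in the form `(R ∩ [F, F]) / [F, R]` given by Hopf's formula. -/
abbrev HopfMultiplier (π : F →* G) : Type _ :=
  ↥(π.ker ⊓ commutator F) ⧸ (⁅(⊤ : Subgroup F), π.ker⁆).subgroupOf (π.ker ⊓ commutator F)

/-- The group `F / [F, R]`, where `R` is the kernel of `π : F →* G`. For `F` free it is the largest
central extension of `G` generated by the images of the free generators. -/
abbrev CentralQuotient (π : F →* G) : Type _ :=
  F ⧸ ⁅(⊤ : Subgroup F), π.ker⁆

namespace CentralQuotient

/-- The projection `F / [F, R] → G` induced by `π`. -/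
def proj (π : F →* G) : CentralQuotient π →* G :=
  QuotientGroup.lift _ π (commutator_le_right ⊤ π.ker)

theorem proj_surjective {π : F →* G} (hπ : Function.Surjective π) :
    Function.Surjective (proj π) :=
  QuotientGroup.lift_surjective_of_surjective _ π hπ _

theorem ker_proj (π : F →* G) : (proj π).ker = π.ker.map (QuotientGroup.mk' _) :=
  QuotientGroup.ker_lift _ _ _

theorem ker_proj_le_center (π : F →* G) : (proj π).ker ≤ center (CentralQuotient π) := by
  rw [ker_proj, map_le_iff_le_comap]
  intro a ha
  rw [mem_comap, mem_center_iff]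
  intro b
  obtain ⟨b, rfl⟩ := QuotientGroup.mk'_surjective _ b
  rw [← commutatorElement_eq_one_iff_mul_comm, ← map_commutatorElement]
  exact (QuotientGroup.eq_one_iff _).2 (commutator_mem_commutator (mem_top b) ha)

theorem exists_comp_eq_proj [IsFreeGroup F] {E : Type*} [Group E] (π : F →* G) {p : E →* G}
    (hp : p.ker ≤ center E) (hsurj : Function.Surjective p) :
    ∃ θ : CentralQuotient π →* E, p.comp θ = proj π := by
  choose s hs using hsurj
  let ψ : F →* E := IsFreeGroup.lift fun i ↦ s (π (IsFreeGroup.of i))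
  have hψ : p.comp ψ = π := IsFreeGroup.ext_hom fun i ↦ by simp [ψ, hs]
  have hker : ⁅(⊤ : Subgroup F), π.ker⁆ ≤ ψ.ker := by
    refine commutator_le.2 fun a _ b hb ↦ ?_
    have hb' : ψ b ∈ center E := hp <| by rwa [MonoidHom.mem_ker, ← MonoidHom.comp_apply, hψ]
    rw [MonoidHom.mem_ker, map_commutatorElement, commutatorElement_eq_one_iff_mul_comm]
    exact mem_center_iff.1 hb' _
  exact ⟨QuotientGroup.lift _ ψ hker, QuotientGroup.monoidHom_ext _ hψ⟩

end CentralQuotient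

/-- Since `[F, R] ≤ R`, Hopf's formula only sees the extension `F / [F, R]` of `G`: it is the part
of the commutator subgroup lying over `1`. -/
noncomputable def HopfMultiplier.mulEquivKerInfCommutator (π : F →* G) :
    HopfMultiplier π ≃*
      ↥((CentralQuotient.proj π).ker ⊓ commutator (CentralQuotient π)) :=
  let mk := QuotientGroup.mk' ⁅(⊤ : Subgroup F), π.ker⁆
  let f := mk.comp (π.ker ⊓ commutator F).subtype
  have hker : (⁅(⊤ : Subgroup F), π.ker⁆).subgroupOf (π.ker ⊓ commutator F) = f.ker := by
    rw [← MonoidHom.comap_ker, QuotientGroup.ker_mk', subgroupOf]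
  have hrange : f.range = (CentralQuotient.proj π).ker ⊓ commutator (CentralQuotient π) := by
    rw [MonoidHom.range_comp, range_subtype, CentralQuotient.ker_proj, commutator_def,
      commutator_def, map_inf_of_ker_le, map_commutator,
      map_top_of_surjective _ (QuotientGroup.mk'_surjective _)]
    rw [QuotientGroup.ker_mk']
    exact commutator_le_right ⊤ π.ker
  ((QuotientGroup.quotientMulEquivOfEq hker).trans (QuotientGroup.quotientKerEquivRange f)).trans
    (MulEquiv.subgroupCongr hrange)

end Hopf

section Arithmetic

theorem exists_modEq_isCoprime {k l : ℕ} [NeZero l] (hkl : k ∣ l) {s : ℤ} (hs : IsCoprime s k) :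
    ∃ t : ℤ, t ≡ s [ZMOD k] ∧ IsCoprime t l := by
  obtain ⟨u, hu⟩ := ZMod.unitsMap_surjective hkl (ZMod.unitOfIsCoprime s hs)
  obtain ⟨t, ht⟩ := ZMod.intCast_surjective (u : ZMod l)
  refine ⟨t, ?_, ((ZMod.coe_int_isUnit_iff_isCoprime _ _).1 (ht ▸ u.isUnit)).symm⟩
  rw [← ZMod.intCast_eq_intCast_iff, ← ZMod.coe_unitOfIsCoprime s hs, ← hu, ZMod.unitsMap_val, ← ht,
    ZMod.cast_intCast hkl]

variable {m n a b : ℕ} {r : ℤ}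

-- Write `m = a k` and `r = 1 + a s`; then `s` is prime to `k`, and replacing it by a representative
-- of its class modulo `k` that is prime to `b` produces `t`.
theorem exists_modEq_gcd_sub_one_eq (hm : 0 < m) (hb : 0 < b) (ha : Int.gcd m (r - 1) = a)
    (hab : m ∣ a * b) : ∃ t : ℤ, t ≡ r [ZMOD m] ∧ Int.gcd (a * b : ℕ) (t - 1) = a := by
  have ha0 : 0 < a := ha ▸ Int.gcd_pos_of_ne_zero_left _ (by positivity)
  obtain ⟨k, rfl⟩ : a ∣ m := ha ▸ Int.natCast_dvd_natCast.1 (Int.gcd_dvd_left m (r - 1))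
  obtain ⟨s, hs⟩ : (a : ℤ) ∣ r - 1 := ha ▸ Int.gcd_dvd_right (a * k : ℕ) (r - 1)
  have hsk : IsCoprime s k := by
    rw [isCoprime_comm, Int.isCoprime_iff_gcd_eq_one]
    rw [hs, Nat.cast_mul, Int.gcd_mul_left, Int.natAbs_natCast] at ha
    exact Nat.eq_of_mul_eq_mul_left ha0 (ha.trans (mul_one a).symm)
  have : NeZero b := ⟨hb.ne'⟩
  obtain ⟨t, hts, htb⟩ := exists_modEq_isCoprime (Nat.dvd_of_mul_dvd_mul_left ha0 hab) hsk
  refine ⟨1 + a * t, ?_, ?_⟩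
  · rw [eq_add_of_sub_eq' hs, Nat.cast_mul]
    exact (hts.mul_left' (c := a)).add_left 1
  · rw [add_sub_cancel_left, Nat.cast_mul, Int.gcd_mul_left, Int.natAbs_natCast,
      Int.isCoprime_iff_gcd_eq_one.1 htb.symm, mul_one]

theorem exists_modEq_pow_modEq_one (hm : 0 < m) (hr : IsCoprime r m)
    (ha : Int.gcd m (r - 1) = a) (hbm : b ∣ m) (hbN : (b : ℤ) ∣ ∑ i ∈ Finset.range n, r ^ i)
    (hab : m ∣ a * b) :
    ∃ t : ℤ, t ≡ r [ZMOD m] ∧ IsCoprime t (a * b : ℕ) ∧ t ^ n ≡ 1 [ZMOD (a * b : ℕ)] ∧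
      Int.gcd (a * b : ℕ) (t - 1) = a := by
  obtain ⟨t, htr, hgcd⟩ := exists_modEq_gcd_sub_one_eq hm (Nat.pos_of_dvd_of_pos hbm hm) ha hab
  have hbm' : (b : ℤ) ∣ m := Int.natCast_dvd_natCast.2 hbm
  have htm : IsCoprime t m := by
    rw [isCoprime_comm, ← ZMod.coe_int_isUnit_iff_isCoprime,
      (ZMod.intCast_eq_intCast_iff _ _ _).2 htr, ZMod.coe_int_isUnit_iff_isCoprime]
    exact hr.symm
  have hat : (a : ℤ) ∣ t - 1 := by
    nth_rw 1 [← hgcd]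
    exact Int.gcd_dvd_right _ _
  have hbt : (b : ℤ) ∣ ∑ i ∈ Finset.range n, t ^ i :=
    (Int.ModEq.dvd_iff (Int.ModEq.sum fun i _ ↦ (htr.of_dvd hbm').pow i)).2 hbN
  refine ⟨t, htr, ?_, ?_, hgcd⟩ <;> rw [Nat.cast_mul]
  · obtain ⟨s, hs⟩ := hat
    exact IsCoprime.mul_right ⟨1, -s, by linear_combination hs⟩
      (htm.of_isCoprime_of_dvd_right hbm')
  · rw [Int.modEq_comm, Int.modEq_iff_dvd, ← geom_sum_mul, mul_comm]
    exact mul_dvd_mul hbt hat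

end Arithmetic

section Semidirect

theorem mem_center_of_forall_apply_eq {A N : Type*} [CommGroup A] [CommGroup N]
    {φ : N →* MulAut A} {e : A ⋊[φ] N} (hleft : ∀ b, φ b e.left = e.left) (hright : φ e.right = 1) :
    e ∈ center (A ⋊[φ] N) := by
  refine mem_center_iff.2 fun f ↦ SemidirectProduct.ext ?_ (mul_comm _ _)
  rw [mul_left, mul_left, hleft, hright, MulAut.one_apply, mul_comm]

theorem exists_ofAdd_one_zpow_eq {m : ℕ} (a : Multiplicative (ZMod m)) :
    ∃ k : ℤ, ofAdd (1 : ZMod m) ^ k = a := by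
  obtain ⟨k, hk⟩ := ZMod.intCast_surjective (toAdd a)
  exact ⟨k, by rw [← ofAdd_zsmul, zsmul_one, hk, ofAdd_toAdd]⟩

section

variable {m : ℕ} {r : ℤ} {N : Type*} [Group N] {φ : N →* MulAut (Multiplicative (ZMod m))} {b : N}

/-- The generator of the normal factor of `ℤ/mℤ ⋊ N`. -/
abbrev genX (φ : N →* MulAut (Multiplicative (ZMod m))) : Multiplicative (ZMod m) ⋊[φ] N :=
  inl (ofAdd 1)

theorem orderOf_genX (φ : N →* MulAut (Multiplicative (ZMod m))) : orderOf (genX φ) = m := by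
  rw [orderOf_injective inl inl_injective, orderOf_ofAdd_eq_addOrderOf, ZMod.addOrderOf_one]

theorem inr_conj_genX (h : φ b (ofAdd 1) = ofAdd (r : ZMod m)) :
    inr b * genX φ * (inr b)⁻¹ = genX φ ^ r := by
  rw [← map_inv, ← inl_aut, h, ← map_zpow, ← ofAdd_zsmul, zsmul_one]

theorem orderOf_commutatorElement_inr_genX (hm : 0 < m)
    (h : φ b (ofAdd 1) = ofAdd (r : ZMod m)) :
    orderOf ⁅(inr b : Multiplicative (ZMod m) ⋊[φ] N), genX φ⁆ = m / Int.gcd m (r - 1) := by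
  rw [commutatorElement_def, inr_conj_genX h, ← zpow_sub_one, orderOf_zpow, orderOf_genX]
  rwa [← orderOf_pos_iff, orderOf_genX]

theorem isCoprime_of_apply_ofAdd_one (h : φ b (ofAdd 1) = ofAdd (r : ZMod m)) : IsCoprime r m := by
  obtain ⟨c, hc⟩ := (φ b).surjective (ofAdd 1)
  obtain ⟨k, rfl⟩ := exists_ofAdd_one_zpow_eq c
  rw [map_zpow, h, ← ofAdd_zsmul, ofAdd.injective.eq_iff, zsmul_eq_mul, mul_comm] at hc
  exact ((ZMod.coe_int_isUnit_iff_isCoprime _ _).1 (IsUnit.of_mul_eq_one _ hc)).symm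

end

theorem closure_genX_inr_eq_top {m n : ℕ}
    (φ : Multiplicative (ZMod n) →* MulAut (Multiplicative (ZMod m))) :
    closure {genX φ, inr (ofAdd 1)} = ⊤ := by
  refine eq_top_iff.2 fun e _ ↦ ?_
  obtain ⟨k, hk⟩ := exists_ofAdd_one_zpow_eq e.left
  obtain ⟨l, hl⟩ := exists_ofAdd_one_zpow_eq e.right
  have he : e = genX φ ^ k * inr (ofAdd 1) ^ l := by
    rw [← map_zpow inl, ← map_zpow inr, hk, hl, inl_left_mul_inr_right]
  rw [he]
  exact mul_mem (zpow_mem (mem_closure_of_mem (Set.mem_insert _ _)) k)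
    (zpow_mem (mem_closure_of_mem (Set.mem_insert_of_mem _ (Set.mem_singleton _))) l)

end Semidirect

section Cover

theorem map_zpow_apply_of_map_apply {A B : Type*} [Group A] [Group B] {f : A →* B} {α : MulAut A}
    {β : MulAut B} (h : ∀ a, f (α a) = β (f a)) (k : ℤ) (a : A) :
    f ((α ^ k) a) = (β ^ k) (f a) := by
  induction k generalizing a with
  | zero => simp
  | succ k ih => rw [zpow_add_one, zpow_add_one, MulAut.mul_apply, MulAut.mul_apply, ih, h]
  | pred k ih =>
    have hinv : f (α⁻¹ a) = β⁻¹ (f a) := by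
      rw [← MulAut.inv_apply_self _ β (f _), ← h, MulAut.apply_inv_self]
    rw [zpow_sub_one, zpow_sub_one, MulAut.mul_apply, MulAut.mul_apply, ih, hinv]

/-- Multiplication by a unit of a ring, as an automorphism of its additive group (written
multiplicatively, as semidirect products require). -/
def unitAut {R : Type*} [Ring R] : Rˣ →* MulAut (Multiplicative R) :=
  (MulAutMultiplicative R).symm.toMonoidHom.comp AddAut.mulLeft

theorem unitAut_apply {R : Type*} [Ring R] (u : Rˣ) (a : Multiplicative R) :
    unitAut u a = ofAdd (u * toAdd a) := rfl

/-- The group `ℤ/Mℤ ⋊ ℤ` in which the generator of `ℤ` acts as multiplication by `t`. Suitable `M`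
and `t` make it a central extension of `ℤ/mℤ ⋊ ℤ/nℤ` in which the commutator of the two generators
has the largest possible order. -/
abbrev MetacyclicCover {M : ℕ} {t : ℤ} (ht : IsCoprime t M) : Type :=
  Multiplicative (ZMod M) ⋊[zpowersHom _ (unitAut (ZMod.unitOfIsCoprime t ht))] Multiplicative ℤ

namespace MetacyclicCover

variable {M m n : ℕ} {t : ℤ} (ht : IsCoprime t M)
  {φ : Multiplicative (ZMod n) →* MulAut (Multiplicative (ZMod m))}

theorem castHom_unitAut (hmM : m ∣ M) (hφ : φ (ofAdd 1) (ofAdd 1) = ofAdd (t : ZMod m))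
    (c : Multiplicative (ZMod M)) :
    (ZMod.castHom hmM (ZMod m)).toAddMonoidHom.toMultiplicative
        (unitAut (ZMod.unitOfIsCoprime t ht) c) =
      φ (ofAdd 1) ((ZMod.castHom hmM (ZMod m)).toAddMonoidHom.toMultiplicative c) := by
  obtain ⟨k, rfl⟩ := exists_ofAdd_one_zpow_eq c
  simp only [map_zpow]
  congr 1
  simp [unitAut_apply, hφ, ZMod.cast_one hmM]

/-- The map `ℤ/Mℤ ⋊ ℤ → ℤ/mℤ ⋊ ℤ/nℤ` reducing both coordinates. -/
def proj (hmM : m ∣ M) (hφ : φ (ofAdd 1) (ofAdd 1) = ofAdd (t : ZMod m)) :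
    MetacyclicCover ht →* Multiplicative (ZMod m) ⋊[φ] Multiplicative (ZMod n) :=
  SemidirectProduct.map (ZMod.castHom hmM (ZMod m)).toAddMonoidHom.toMultiplicative
    (zpowersHom _ (ofAdd 1)) fun z ↦ MonoidHom.ext fun c ↦ by
      simp only [MonoidHom.comp_apply, MulEquiv.toMonoidHom_eq_coe, MonoidHom.coe_coe,
        zpowersHom_apply, map_zpow]
      exact map_zpow_apply_of_map_apply (castHom_unitAut ht hmM hφ) _ c

variable (hmM : m ∣ M) (hφ : φ (ofAdd 1) (ofAdd 1) = ofAdd (t : ZMod m))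

theorem proj_genX : proj ht hmM hφ (genX _) = genX φ := by
  simp [proj, ZMod.cast_one hmM]

theorem proj_inr_ofAdd_one : proj ht hmM hφ (inr (ofAdd 1)) = inr (ofAdd 1) := by
  simp [proj]

theorem proj_surjective : Function.Surjective (proj ht hmM hφ) := by
  rw [← MonoidHom.range_eq_top, ← top_le_iff, ← closure_genX_inr_eq_top φ, closure_le]
  exact Set.pair_subset ⟨_, proj_genX ht hmM hφ⟩ ⟨_, proj_inr_ofAdd_one ht hmM hφ⟩

theorem unitAut_apply_eq_self {c : Multiplicative (ZMod M)}
    (htm : (M : ℤ) ∣ (t - 1) * m) (hc : ZMod.castHom hmM (ZMod m) (toAdd c) = 0) :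
    unitAut (ZMod.unitOfIsCoprime t ht) c = c := by
  obtain ⟨k, hk⟩ := ZMod.intCast_surjective (toAdd c)
  rw [← hk, map_intCast, ZMod.intCast_zmod_eq_zero_iff_dvd] at hc
  have hMk : (M : ℤ) ∣ (t - 1) * k := htm.trans (mul_dvd_mul_left _ hc)
  rw [← ZMod.intCast_zmod_eq_zero_iff_dvd] at hMk
  rw [unitAut_apply, ← toAdd.injective.eq_iff, toAdd_ofAdd, ZMod.coe_unitOfIsCoprime, ← hk,
    ← sub_eq_zero, ← hMk]
  push_cast
  ring

theorem ker_proj_le_center (htn : t ^ n ≡ 1 [ZMOD M]) (htm : (M : ℤ) ∣ (t - 1) * m) :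
    (proj ht hmM hφ).ker ≤ center (MetacyclicCover ht) := by
  intro e he
  rw [MonoidHom.mem_ker, SemidirectProduct.ext_iff] at he
  obtain ⟨k, hk⟩ : (n : ℤ) ∣ toAdd e.right := by
    simpa [proj, ← ofAdd_zsmul, ZMod.intCast_zmod_eq_zero_iff_dvd] using he.2
  have hpow : ZMod.unitOfIsCoprime t ht ^ n = 1 := by
    rw [Units.ext_iff, Units.val_pow_eq_pow_val, ZMod.coe_unitOfIsCoprime]
    exact_mod_cast (ZMod.intCast_eq_intCast_iff _ _ _).2 htn
  have hfix : unitAut (ZMod.unitOfIsCoprime t ht) ∈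
      MulAction.stabilizer (MulAut (Multiplicative (ZMod M))) e.left :=
    unitAut_apply_eq_self ht hmM htm he.1
  refine mem_center_of_forall_apply_eq (fun z ↦ zpow_mem hfix (toAdd z)) ?_
  rw [zpowersHom_apply, hk, ← map_zpow, zpow_mul, zpow_natCast, hpow, one_zpow, map_one]

theorem orderOf_commutatorElement (hM : 0 < M) :
    orderOf ⁅(inr (ofAdd 1) : MetacyclicCover ht),
      genX (zpowersHom _ (unitAut (ZMod.unitOfIsCoprime t ht)))⁆ = M / Int.gcd M (t - 1) :=
  orderOf_commutatorElement_inr_genX hM (by simp [unitAut_apply])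

end MetacyclicCover

end Cover

section SplitMetacyclic

variable {m n : ℕ} {r : ℤ} {φ : Multiplicative (ZMod n) →* MulAut (Multiplicative (ZMod m))}

theorem exists_centralExtension_orderOf_commutatorElement_eq (hm : 0 < m)
    (hφ : φ (ofAdd 1) (ofAdd 1) = ofAdd (r : ZMod m)) {b : ℕ} (hbm : b ∣ m)
    (hbN : (b : ℤ) ∣ ∑ i ∈ Finset.range n, r ^ i) (hab : m ∣ Int.gcd m (r - 1) * b) :
    ∃ (E : Type) (_ : Group E) (p : E →* Multiplicative (ZMod m) ⋊[φ] Multiplicative (ZMod n)),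
      Function.Surjective p ∧ p.ker ≤ center E ∧
        ∃ X Y : E, p X = genX φ ∧ p Y = inr (ofAdd 1) ∧ orderOf ⁅Y, X⁆ = b := by
  have ha : 0 < Int.gcd m (r - 1) := Int.gcd_pos_of_ne_zero_left _ (by positivity)
  obtain ⟨t, htr, ht, htn, hgcd⟩ :=
    exists_modEq_pow_modEq_one hm (isCoprime_of_apply_ofAdd_one hφ) rfl hbm hbN hab
  rw [← (ZMod.intCast_eq_intCast_iff _ _ _).2 htr] at hφ
  have htm : ((Int.gcd m (r - 1) * b : ℕ) : ℤ) ∣ (t - 1) * m := by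
    rw [Nat.cast_mul, ← hgcd]
    exact mul_dvd_mul (Int.gcd_dvd_right _ _) (Int.natCast_dvd_natCast.2 hbm)
  refine ⟨MetacyclicCover ht, inferInstance, MetacyclicCover.proj ht hab hφ,
    MetacyclicCover.proj_surjective ht hab hφ,
    MetacyclicCover.ker_proj_le_center ht hab hφ htn htm, _, _,
    MetacyclicCover.proj_genX ht hab hφ, MetacyclicCover.proj_inr_ofAdd_one ht hab hφ, ?_⟩
  rw [MetacyclicCover.orderOf_commutatorElement ht
    (Nat.mul_pos ha (Nat.pos_of_dvd_of_pos hbm hm)), hgcd, Nat.mul_div_cancel_left _ ha]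

theorem apply_ofAdd_one_of_forall (hrn : r ^ n ≡ 1 [ZMOD m])
    (hφ : ∀ (a : ZMod n) (b : ZMod m), φ (ofAdd a) (ofAdd b) = ofAdd ((r : ZMod m) ^ a.val * b)) :
    φ (ofAdd 1) (ofAdd 1) = ofAdd (r : ZMod m) := by
  rw [hφ, mul_one]
  obtain rfl | hn := eq_or_ne n 1
  · have hr : (r : ZMod m) = 1 := by
      simpa using (ZMod.intCast_eq_intCast_iff _ _ _).2 hrn
    rw [hr, one_pow]
  · rw [ZMod.val_one'' hn, pow_one]

variable {F : Type*} [Group F]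
  {π : F →* Multiplicative (ZMod m) ⋊[φ] Multiplicative (ZMod n)} {X Y : CentralQuotient π}

theorem orderOf_commutatorElement_eq_gcd [IsFreeGroup F] (hm : 0 < m)
    (hφ : φ (ofAdd 1) (ofAdd 1) = ofAdd (r : ZMod m))
    (hdvd : m ∣ Int.gcd m (r - 1) * Int.gcd m (∑ i ∈ Finset.range n, r ^ i))
    (hX : CentralQuotient.proj π X = genX φ) (hY : CentralQuotient.proj π Y = inr (ofAdd 1)) :
    orderOf ⁅Y, X⁆ = Int.gcd m (∑ i ∈ Finset.range n, r ^ i) := by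
  apply dvd_antisymm
  · apply orderOf_commutatorElement_dvd (CentralQuotient.ker_proj_le_center π)
    · rw [hX, hY, inr_conj_genX hφ]
    · rw [hX, ← orderOf_dvd_iff_pow_eq_one, orderOf_genX]
    · rw [hY, ← map_pow, ← ofAdd_nsmul, nsmul_one, ZMod.natCast_self, ofAdd_zero, map_one]
  · obtain ⟨E, _, p, hsurj, hcenter, X', Y', hX', hY', hord⟩ :=
      exists_centralExtension_orderOf_commutatorElement_eq hm hφ
        (Int.natCast_dvd_natCast.1 (Int.gcd_dvd_left _ _)) (Int.gcd_dvd_right _ _) hdvd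
    obtain ⟨θ, hθ⟩ := CentralQuotient.exists_comp_eq_proj π hcenter hsurj
    have hθX : p (θ X) = p X' := by rw [hX', ← hX, ← hθ, MonoidHom.comp_apply]
    have hθY : p (θ Y) = p Y' := by rw [hY', ← hY, ← hθ, MonoidHom.comp_apply]
    rw [← hord, ← commutatorElement_eq_of_map_eq hcenter hθY hθX, ← map_commutatorElement]
    exact orderOf_map_dvd θ _

theorem ker_proj_inf_commutator_eq_zpowers (hm : 0 < m)
    (hφ : φ (ofAdd 1) (ofAdd 1) = ofAdd (r : ZMod m))
    (hX : CentralQuotient.proj π X = genX φ) (hY : CentralQuotient.proj π Y = inr (ofAdd 1)) :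
    (CentralQuotient.proj π).ker ⊓ commutator (CentralQuotient π) =
      zpowers (⁅Y, X⁆ ^ (m / Int.gcd m (r - 1))) := by
  rw [inf_comm, commutator_eq_zpowers (CentralQuotient.ker_proj_le_center π) (X := X) (Y := Y)
      (by rw [hX, hY, inr_conj_genX hφ]) (by rw [hX, hY, closure_genX_inr_eq_top])
      (by rw [hX, ← orderOf_dvd_iff_pow_eq_one, orderOf_genX]) (isCoprime_of_apply_ofAdd_one hφ),
    zpowers_inf_ker, map_commutatorElement, hX, hY, orderOf_commutatorElement_inr_genX hm hφ]

end SplitMetacyclic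

/-- For `n = 0` the convention `ZMod 0 = ℤ` makes this the infinite group `ℤ/mℤ ⋊ ℤ`, and then
`d = gcd(m, r - 1)`. -/
theorem schur_multiplier_split_metacyclic_general {m n : ℕ} (hm : 0 < m) (r : ℤ)
    {φ : Multiplicative (ZMod n) →* MulAut (Multiplicative (ZMod m))}
    (hφ : φ (ofAdd 1) (ofAdd 1) = ofAdd (r : ZMod m)) {d : ℕ}
    (hd : d * m = Int.gcd m (r - 1) * Int.gcd m (∑ i ∈ Finset.range n, r ^ i))
    {F : Type*} [Group F] [IsFreeGroup F]
    (π : F →* Multiplicative (ZMod m) ⋊[φ] Multiplicative (ZMod n))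
    (hπ : Function.Surjective π) :
    Nonempty (HopfMultiplier π ≃* Multiplicative (ZMod d)) := by
  obtain ⟨X, hX⟩ := CentralQuotient.proj_surjective hπ (genX φ)
  obtain ⟨Y, hY⟩ := CentralQuotient.proj_surjective hπ (inr (ofAdd 1))
  have hT := orderOf_commutatorElement_eq_gcd hm hφ (hd ▸ dvd_mul_left m d) hX hY
  have ha : 0 < Int.gcd m (r - 1) := Int.gcd_pos_of_ne_zero_left _ (by positivity)
  have ham : Int.gcd m (r - 1) ∣ m := Int.natCast_dvd_natCast.1 (Int.gcd_dvd_left _ _)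
  have hkd : m / Int.gcd m (r - 1) * d = orderOf ⁅Y, X⁆ := by
    rw [hT]
    exact Nat.eq_of_mul_eq_mul_left ha (by rw [← mul_assoc, Nat.mul_div_cancel' ham, mul_comm, hd])
  have hk : 0 < m / Int.gcd m (r - 1) := Nat.div_pos (Nat.le_of_dvd hm ham) ha
  have hcard : Nat.card (zpowers (⁅Y, X⁆ ^ (m / Int.gcd m (r - 1)))) = d := by
    rw [Nat.card_zpowers, orderOf_pow_of_dvd hk.ne' ⟨d, hkd.symm⟩, ← hkd,
      Nat.mul_div_cancel_left _ hk]
  exact ⟨(HopfMultiplier.mulEquivKerInfCommutator π).trans <|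
    (MulEquiv.subgroupCongr (ker_proj_inf_commutator_eq_zpowers hm hφ hX hY)).trans <|
      (hcard ▸ zmodCyclicMulEquiv inferInstance).symm⟩

end SchurMultiplier

/-- (Lemma 5.13 of "G-marked moduli spaces".)
Let `G = ⟨x, y | x^m = y^n = 1, y·x·y⁻¹ = x^r⟩` be the split metacyclic group,
realized concretely as the semidirect product `(ℤ/mℤ) ⋊ (ℤ/nℤ)` in which the
generator of `ℤ/nℤ` acts on `ℤ/mℤ` by multiplication by `r` (here `r` is a unit
modulo `m` with `r^n ≡ 1 (mod m)`), and set
`d = gcd(m, r−1)·gcd(m, 1 + r + ⋯ + r^{n−1}) / m`.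
Then `H₂(G, ℤ) ≅ ℤ/dℤ`; here the second group homology with trivial integer
coefficients (the Schur multiplier) is expressed via Hopf's formula: for every
free presentation `π : F ↠ G` with kernel `R`, one has
`(R ∩ [F,F]) / [F,R] ≅ ℤ/dℤ`. -/
theorem schur_multiplier_split_metacyclic
    (m n : ℕ) (hm : 0 < m) (hn : 0 < n) (r : ℤ)
    (hr : IsUnit (r : ZMod m)) (hrn : r ^ n ≡ 1 [ZMOD (m : ℤ)])
    (φ : Multiplicative (ZMod n) →* MulAut (Multiplicative (ZMod m)))
    (hφ : ∀ (a : ZMod n) (b : ZMod m),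
      φ (Multiplicative.ofAdd a) (Multiplicative.ofAdd b)
        = Multiplicative.ofAdd ((r : ZMod m) ^ a.val * b))
    (d : ℕ)
    (hd : (d : ℤ) * (m : ℤ) =
      (Int.gcd (m : ℤ) (r - 1) : ℤ) *
        (Int.gcd (m : ℤ) (∑ i ∈ Finset.range n, r ^ i) : ℤ))
    (F : Type) [Group F] [IsFreeGroup F]
    (π : F →* (Multiplicative (ZMod m) ⋊[φ] Multiplicative (ZMod n)))
    (hπ : Function.Surjective π)
    [hnorm : ((⁅(⊤ : Subgroup F), π.ker⁆).subgroupOf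
        (π.ker ⊓ commutator F)).Normal] :
    Nonempty ((↥(π.ker ⊓ commutator F) ⧸
        ((⁅(⊤ : Subgroup F), π.ker⁆).subgroupOf (π.ker ⊓ commutator F)))
      ≃* Multiplicative (ZMod d)) :=
  schur_multiplier_split_metacyclic_general hm r (apply_ofAdd_one_of_forall hrn hφ)
    (mod_cast hd) π hπ
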